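/- The averaged reconstruction α_W, defined by α_W(g) = (1/|W|) Σ_{i ∈ W} α_{W,i}(g), satisfies: (a) for every extendable de Bruijn density g ∈ D^W_dBe, α_W(g) is a density on E^{V+W}; (b) for every g in the image of β_W, α_W(g) = α_{W,i}(g) for every i ∈ W. -/

import Mathlib

open Finset
open scoped Classical

/-- Patterns over the integer interval `{A,...,B}` with values in `E`. -/
abbrev Pat (E : Type) (A B : ℤ) : Type := {x // x ∈ Finset.Icc A B} → E

/-- Evaluation of a pattern at an integer site (arbitrary value outside the domain). -/
noncomputable def ev {E : Type} [Nonempty E] {A B : ℤ} (φ : Pat E A B) (j : ℤ) : E :=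
  if h : j ∈ Finset.Icc A B then φ ⟨j, h⟩ else Classical.arbitrary E

/-- The window `σ_i(φ)|_V` of a pattern `φ`, a pattern on `V = {-p,...,q}`. -/
noncomputable def win {E : Type} [Nonempty E] (p q : ℕ) {A B : ℤ} (i : ℤ) (φ : Pat E A B) :
    Pat E (-(p : ℤ)) (q : ℤ) :=
  fun v => ev φ (i + v.1)

/-- A density on a finite type: nonnegative weights summing to one. -/
def IsDensity {α : Type} [Fintype α] (g : α → ℝ) : Prop :=
  (∀ x, 0 ≤ g x) ∧ ∑ x, g x = 1

/-- The distribution associated with a weight function, evaluated on an event. -/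
noncomputable def Pr {α : Type} [Fintype α] (g : α → ℝ) (P : α → Prop) : ℝ :=
  ∑ x, if P x then g x else 0

/-- Conditional probability `μ[P | Q] = μ[P ∩ Q]/μ[Q]` (`0` if `0/0`). -/
noncomputable def condPr {α : Type} [Fintype α] (g : α → ℝ) (P Q : α → Prop) : ℝ :=
  Pr g (fun x => P x ∧ Q x) / Pr g Q

/-- The marginalization operator `β_W`. -/
noncomputable def beta {E : Type} [Fintype E] [DecidableEq E] [Nonempty E]
    (p q : ℕ) (t u : ℤ) (g : Pat E (-(p : ℤ) - t) ((q : ℤ) + u) → ℝ) (i : ℤ)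
    (ψ : Pat E (-(p : ℤ)) (q : ℤ)) : ℝ :=
  Pr g (fun χ => win p q i χ = ψ)

/-- The reconstruction operator `α_{W,i}`. -/
noncomputable def alpha {E : Type} [Fintype E] [DecidableEq E] [Nonempty E]
    (p q : ℕ) (t u : ℤ) (g : ℤ → Pat E (-(p : ℤ)) (q : ℤ) → ℝ) (i : ℤ)
    (ψ : Pat E (-(p : ℤ) - t) ((q : ℤ) + u)) : ℝ :=
  (∏ k ∈ Finset.Icc (-t) (i - 1),
      condPr (g k) (fun χ => ev χ (-(p : ℤ)) = ev ψ (k + -(p : ℤ)))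
        (fun χ => ∀ v ∈ Finset.Icc (-(p : ℤ) + 1) (q : ℤ), ev χ v = ev ψ (k + v))) *
    g i (win p q i ψ) *
    (∏ l ∈ Finset.Icc (i + 1) u,
      condPr (g l) (fun χ => ev χ (q : ℤ) = ev ψ (l + (q : ℤ)))
        (fun χ => ∀ v ∈ Finset.Icc (-(p : ℤ)) ((q : ℤ) - 1), ev χ v = ev ψ (l + v)))

/-- Extendable de Bruijn densities. -/
def Extendable {E : Type} [Fintype E] [DecidableEq E] [Nonempty E]
    (p q : ℕ) (t u : ℤ) (g : ℤ → Pat E (-(p : ℤ)) (q : ℤ) → ℝ) : Prop :=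
  ∀ i ∈ Finset.Icc (-t) u, ∀ φ, 0 < g i φ →
    ∃ ψ : Pat E (-(p : ℤ) - t) ((q : ℤ) + u),
      win p q i ψ = φ ∧ ∀ j ∈ Finset.Icc (-t) u, 0 < g j (win p q j ψ)

/-- The event `{χ : χ|_S = ψ|_S}`. -/
def agreeOn {E : Type} [Nonempty E] {A B : ℤ} (S : Finset ℤ) (ψ χ : Pat E A B) : Prop :=
  ∀ j ∈ S, ev χ j = ev ψ j

/-- The averaged reconstruction `α_W`. -/
noncomputable def alphaBar {E : Type} [Fintype E] [DecidableEq E] [Nonempty E]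
    (p q : ℕ) (t u : ℤ) (g : ℤ → Pat E (-(p : ℤ)) (q : ℤ) → ℝ)
    (ψ : Pat E (-(p : ℤ) - t) ((q : ℤ) + u)) : ℝ :=
  (((Finset.Icc (-t) u).card : ℝ))⁻¹ * ∑ i ∈ Finset.Icc (-t) u, alpha p q t u g i ψ

section Helpers

set_option linter.unusedSectionVars false

variable {E : Type} [Fintype E] [DecidableEq E] [Nonempty E]

/-- Left factor of the reconstruction. -/
noncomputable def Lfac (p q : ℕ) {A B : ℤ} (g : ℤ → Pat E (-(p : ℤ)) (q : ℤ) → ℝ) (k : ℤ)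
    (ψ : Pat E A B) : ℝ :=
  condPr (g k) (fun χ => ev χ (-(p : ℤ)) = ev ψ (k + -(p : ℤ)))
        (fun χ => ∀ v ∈ Finset.Icc (-(p : ℤ) + 1) (q : ℤ), ev χ v = ev ψ (k + v))

/-- Right factor of the reconstruction. -/
noncomputable def Rfac (p q : ℕ) {A B : ℤ} (g : ℤ → Pat E (-(p : ℤ)) (q : ℤ) → ℝ) (l : ℤ)
    (ψ : Pat E A B) : ℝ :=
  condPr (g l) (fun χ => ev χ (q : ℤ) = ev ψ (l + (q : ℤ)))
        (fun χ => ∀ v ∈ Finset.Icc (-(p : ℤ)) ((q : ℤ) - 1), ev χ v = ev ψ (l + v))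

theorem alpha_eq (p q : ℕ) (t u : ℤ) (g : ℤ → Pat E (-(p : ℤ)) (q : ℤ) → ℝ) (i : ℤ)
    (ψ : Pat E (-(p : ℤ) - t) ((q : ℤ) + u)) :
    alpha p q t u g i ψ = (∏ k ∈ Finset.Icc (-t) (i - 1), Lfac p q g k ψ) *
      g i (win p q i ψ) * (∏ l ∈ Finset.Icc (i + 1) u, Rfac p q g l ψ) := rfl

theorem ev_win (p q : ℕ) {A B : ℤ} (i : ℤ) (ψ : Pat E A B) (v : ℤ)
    (hv : v ∈ Finset.Icc (-(p : ℤ)) (q : ℤ)) : ev (win p q i ψ) v = ev ψ (i + v) := by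
  rw [ev, dif_pos hv]; rfl

theorem pat_ext {A B : ℤ} {φ ψ : Pat E A B}
    (h : ∀ v ∈ Finset.Icc A B, ev φ v = ev ψ v) : φ = ψ := by
  funext ⟨v, hv⟩
  have := h v hv
  simpa only [ev, dif_pos hv] using this

theorem eq_win_iff (p q : ℕ) {A B : ℤ} (i : ℤ) (ψ : Pat E A B) (χ : Pat E (-(p : ℤ)) (q : ℤ)) :
    χ = win p q i ψ ↔ ∀ v ∈ Finset.Icc (-(p : ℤ)) (q : ℤ), ev χ v = ev ψ (i + v) := by
  constructor
  · rintro rfl v hv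
    exact ev_win p q i ψ v hv
  · intro h
    apply pat_ext
    intro v hv
    rw [h v hv, ev_win p q i ψ v hv]

theorem Pr_congr {α : Type} [Fintype α] (g : α → ℝ) {P Q : α → Prop} (h : ∀ x, P x ↔ Q x) :
    Pr g P = Pr g Q := by
  have : P = Q := funext fun x => propext (h x)
  rw [this]

theorem Pr_eq_single {α : Type} [Fintype α] (g : α → ℝ) (a : α) :
    Pr g (fun x => x = a) = g a := by
  simp [Pr]

theorem Pr_nonneg {α : Type} [Fintype α] (g : α → ℝ) (hg : ∀ x, 0 ≤ g x) (P : α → Prop) :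
    0 ≤ Pr g P := by
  apply Finset.sum_nonneg
  intro x _
  split_ifs
  · exact hg x
  · exact le_rfl

theorem Pr_pos {α : Type} [Fintype α] (g : α → ℝ) (hg : ∀ x, 0 ≤ g x) (P : α → Prop) (a : α)
    (ha : P a) (hga : 0 < g a) : 0 < Pr g P := by
  apply Finset.sum_pos'
  · intro x _
    split_ifs
    · exact hg x
    · exact le_rfl
  · exact ⟨a, Finset.mem_univ _, by simpa [ha] using hga⟩

theorem Lfac_eq (p q : ℕ) {A B : ℤ} (g : ℤ → Pat E (-(p : ℤ)) (q : ℤ) → ℝ) (k : ℤ)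
    (ψ : Pat E A B) : Lfac p q g k ψ = g k (win p q k ψ) / Pr (g k)
      (fun χ => ∀ v ∈ Finset.Icc (-(p : ℤ) + 1) (q : ℤ), ev χ v = ev ψ (k + v)) := by
  unfold Lfac condPr
  congr 1
  rw [← Pr_eq_single (g k) (win p q k ψ)]
  apply Pr_congr
  intro χ
  rw [eq_win_iff]
  constructor
  · rintro ⟨h1, h2⟩ v hv
    rw [Finset.mem_Icc] at hv
    by_cases h : v = -(p : ℤ)
    · rw [h]; exact h1
    · exact h2 v (Finset.mem_Icc.2 ⟨by omega, hv.2⟩)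
  · intro h
    refine ⟨h _ (Finset.mem_Icc.2 ⟨by omega, by omega⟩), fun v hv => h v ?_⟩
    rw [Finset.mem_Icc] at hv ⊢
    omega

theorem Rfac_eq (p q : ℕ) {A B : ℤ} (g : ℤ → Pat E (-(p : ℤ)) (q : ℤ) → ℝ) (k : ℤ)
    (ψ : Pat E A B) : Rfac p q g k ψ = g k (win p q k ψ) / Pr (g k)
      (fun χ => ∀ v ∈ Finset.Icc (-(p : ℤ)) ((q : ℤ) - 1), ev χ v = ev ψ (k + v)) := by
  unfold Rfac condPr
  congr 1
  rw [← Pr_eq_single (g k) (win p q k ψ)]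
  apply Pr_congr
  intro χ
  rw [eq_win_iff]
  constructor
  · rintro ⟨h1, h2⟩ v hv
    rw [Finset.mem_Icc] at hv
    by_cases h : v = (q : ℤ)
    · rw [h]; exact h1
    · exact h2 v (Finset.mem_Icc.2 ⟨by omega, by omega⟩)
  · intro h
    refine ⟨h _ (Finset.mem_Icc.2 ⟨by omega, by omega⟩), fun v hv => h v ?_⟩
    rw [Finset.mem_Icc] at hv ⊢
    omega

theorem Pr_beta (p q : ℕ) (t u : ℤ) (g : Pat E (-(p : ℤ) - t) ((q : ℤ) + u) → ℝ) (i : ℤ)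
    (Q : Pat E (-(p : ℤ)) (q : ℤ) → Prop) :
    Pr (beta p q t u g i) Q = Pr g (fun χ => Q (win p q i χ)) := by
  unfold beta Pr
  have : ∀ x : Pat E (-(p : ℤ)) (q : ℤ),
      (if Q x then ∑ χ, (if win p q i χ = x then g χ else 0) else 0)
      = ∑ χ, (if win p q i χ = x then (if Q (win p q i χ) then g χ else 0) else 0) := by
    intro x
    split_ifs with h
    · apply Finset.sum_congr rfl
      intro χ _
      by_cases h' : win p q i χ = x
      · simp [h', h]
      · simp [h']
    · symm
      apply Finset.sum_eq_zero
      intro χ _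
      by_cases h' : win p q i χ = x
      · simp [h', h]
      · simp [h']
  refine Eq.trans (Finset.sum_congr rfl fun x _ => Eq.trans ?_ (this x)) ?_
  · congr!
  rw [Finset.sum_comm]
  apply Finset.sum_congr rfl
  intro χ _
  simp

theorem alpha_beta_succ (p q : ℕ) (t u : ℤ) (g : Pat E (-(p : ℤ) - t) ((q : ℤ) + u) → ℝ) (i : ℤ)
    (hi : -t ≤ i) (hi' : i + 1 ≤ u) (ψ : Pat E (-(p : ℤ) - t) ((q : ℤ) + u)) :
    alpha p q t u (beta p q t u g) (i + 1) ψ = alpha p q t u (beta p q t u g) i ψ := by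
  have e1 : Finset.Icc (-t) (i + 1 - 1) = insert i (Finset.Icc (-t) (i - 1)) := by
    ext x; simp only [Finset.mem_Icc, Finset.mem_insert]; omega
  have e2 : Finset.Icc (i + 1) u = insert (i + 1) (Finset.Icc (i + 1 + 1) u) := by
    ext x; simp only [Finset.mem_Icc, Finset.mem_insert]; omega
  rw [alpha_eq, alpha_eq, e1, e2, Finset.prod_insert (by simp), Finset.prod_insert (by simp),
    Lfac_eq, Rfac_eq, Pr_beta, Pr_beta]
  have : Pr g (fun χ => ∀ v ∈ Finset.Icc (-(p : ℤ) + 1) (q : ℤ),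
        ev (win p q i χ) v = ev ψ (i + v)) =
      Pr g (fun χ => ∀ v ∈ Finset.Icc (-(p : ℤ)) ((q : ℤ) - 1),
        ev (win p q (i + 1) χ) v = ev ψ (i + 1 + v)) := by
    apply Pr_congr
    intro χ
    constructor
    · intro h v hv
      rw [Finset.mem_Icc] at hv
      have := h (v + 1) (Finset.mem_Icc.2 ⟨by omega, by omega⟩)
      rw [ev_win _ _ _ _ _ (Finset.mem_Icc.2 ⟨by omega, by omega⟩)] at this ⊢
      rw [show i + 1 + v = i + (v + 1) by ring]
      exact this
    · intro h v hv
      rw [Finset.mem_Icc] at hv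
      have := h (v - 1) (Finset.mem_Icc.2 ⟨by omega, by omega⟩)
      rw [ev_win _ _ _ _ _ (Finset.mem_Icc.2 ⟨by omega, by omega⟩)] at this ⊢
      rw [show i + 1 + (v - 1) = i + v by ring] at this
      exact this
  rw [this]
  ring

theorem alpha_beta_const (p q : ℕ) (t u : ℤ) (g : Pat E (-(p : ℤ) - t) ((q : ℤ) + u) → ℝ)
    (ψ : Pat E (-(p : ℤ) - t) ((q : ℤ) + u)) (n : ℕ) (hn : -t + n ≤ u) :
    alpha p q t u (beta p q t u g) (-t + n) ψ = alpha p q t u (beta p q t u g) (-t) ψ := by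
  induction n with
  | zero => simp
  | succ n ih =>
    push_cast at hn ⊢
    rw [← add_assoc, alpha_beta_succ p q t u g _ (by omega) (by omega), ih (by omega)]

/-- Summation after resampling. -/
theorem resample {α β : Type} [Fintype α] [Fintype β] (f : α → β → α) (r : α → β)
    (h1 : ∀ a b, r (f a b) = b) (h2 : ∀ a b, f (f a b) (r a) = a) (G : α → ℝ) :
    (Fintype.card β : ℝ) * ∑ a, G a = ∑ a, ∑ b, G (f a b) := by
  let e : α × β ≃ α × β :=
    { toFun := fun x => (f x.1 x.2, r x.1)
      invFun := fun x => (f x.1 x.2, r x.1)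
      left_inv := fun x => by simp [h1, h2]
      right_inv := fun x => by simp [h1, h2] }
  have h := Equiv.sum_comp e (fun x => G x.1)
  rw [Fintype.sum_prod_type, Fintype.sum_prod_type] at h
  simp only [e, Equiv.coe_fn_mk] at h
  rw [h]
  simp [Finset.mul_sum]

/-- Updating a pattern at one site. -/
noncomputable def upd {A B : ℤ} (ψ : Pat E A B) (j : ℤ) (e : E) : Pat E A B :=
  fun x => if x.1 = j then e else ψ x

theorem ev_upd_ne {A B : ℤ} (ψ : Pat E A B) (j : ℤ) (e : E) (v : ℤ) (h : v ≠ j) :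
    ev (upd ψ j e) v = ev ψ v := by
  simp [ev, upd, h]

theorem ev_upd_self {A B : ℤ} (ψ : Pat E A B) (j : ℤ) (e : E) (h : j ∈ Finset.Icc A B) :
    ev (upd ψ j e) j = e := by
  rw [ev, dif_pos h]; simp [upd]

theorem step_sum {A B : ℤ} (j : ℤ) (hj : j ∈ Finset.Icc A B) (F C : Pat E A B → ℝ)
    (hF : ∀ ψ e, F (upd ψ j e) = F ψ) (hC : ∀ ψ, F ψ ≠ 0 → ∑ e, C (upd ψ j e) = 1) :
    (Fintype.card E : ℝ) * ∑ ψ, F ψ * C ψ = ∑ ψ, F ψ := by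
  rw [resample (fun ψ e => upd ψ j e) (fun ψ => ev ψ j)]
  · apply Finset.sum_congr rfl
    intro ψ _
    simp only [hF]
    rw [← Finset.mul_sum]
    by_cases h : F ψ = 0
    · simp [h]
    · rw [hC ψ h, mul_one]
  · intro ψ e
    exact ev_upd_self ψ j e hj
  · intro ψ e
    apply pat_ext
    intro v hv
    by_cases h : v = j
    · subst h; rw [ev_upd_self _ _ _ hv]
    · rw [ev_upd_ne _ _ _ _ h, ev_upd_ne _ _ _ _ h]

theorem base_sum (p q : ℕ) (t u : ℤ) (g : Pat E (-(p : ℤ)) (q : ℤ) → ℝ) (hg : ∑ φ, g φ = 1)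
    (i : ℤ) (h1 : -t ≤ i) (h2 : i ≤ u) :
    ∑ ψ : Pat E (-(p : ℤ) - t) ((q : ℤ) + u), g (win p q i ψ) =
      (Fintype.card E : ℝ) ^ (u + t).toNat := by
  have hE : (Fintype.card E : ℝ) ≠ 0 := by
    exact_mod_cast Fintype.card_ne_zero
  let f : Pat E (-(p : ℤ) - t) ((q : ℤ) + u) → Pat E (-(p : ℤ)) (q : ℤ) →
      Pat E (-(p : ℤ) - t) ((q : ℤ) + u) :=
    fun ψ φ x => if x.1 - i ∈ Finset.Icc (-(p : ℤ)) (q : ℤ) then ev φ (x.1 - i) else ψ x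
  have hf1 : ∀ ψ φ v, v ∈ Finset.Icc (-(p : ℤ)) (q : ℤ) → ev (f ψ φ) (i + v) = ev φ v := by
    intro ψ φ v hv
    have hv' := Finset.mem_Icc.1 hv
    rw [ev, dif_pos (Finset.mem_Icc.2 ⟨by omega, by omega⟩)]
    simp only [f, add_sub_cancel_left, if_pos hv]
  have hf2 : ∀ ψ φ v, v - i ∉ Finset.Icc (-(p : ℤ)) (q : ℤ) → ev (f ψ φ) v = ev ψ v := by
    intro ψ φ v hv
    simp only [ev, f, if_neg hv]
  have hw : ∀ ψ φ, win p q i (f ψ φ) = φ := by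
    intro ψ φ
    symm
    rw [eq_win_iff]
    intro v hv
    rw [hf1 _ _ _ hv]
  have key := resample f (win p q i) hw (by
    intro ψ φ
    apply pat_ext
    intro v hv
    by_cases h : v - i ∈ Finset.Icc (-(p : ℤ)) (q : ℤ)
    · have e : v = i + (v - i) := by ring
      rw [e, hf1 _ _ _ h, ev_win _ _ _ _ _ h]
    · rw [hf2 _ _ _ h, hf2 _ _ _ h]) (fun ψ => g (win p q i ψ))
  simp only [hw, hg] at key
  simp only [Finset.sum_const, Finset.card_univ, nsmul_eq_mul, mul_one, Fintype.card_fun,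
    Fintype.card_coe, Int.card_Icc] at key
  push_cast at key
  have e : ((q : ℤ) + u + 1 - (-(p : ℤ) - t)).toNat =
      ((q : ℤ) + 1 - -(p : ℤ)).toNat + (u + t).toNat := by omega
  rw [e, pow_add] at key
  exact mul_left_cancel₀ (pow_ne_zero _ hE) key

theorem win_congr (p q : ℕ) {A B : ℤ} (i : ℤ) (ψ ψ' : Pat E A B)
    (h : ∀ v ∈ Finset.Icc (-(p : ℤ)) (q : ℤ), ev ψ (i + v) = ev ψ' (i + v)) :
    win p q i ψ = win p q i ψ' := by
  rw [eq_win_iff]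
  intro v hv
  rw [ev_win _ _ _ _ _ hv, h v hv]

theorem Pr_sum_eq {α : Type} [Fintype α] (g : α → ℝ) (X : α → E) (Q : α → Prop) :
    ∑ e, Pr g (fun x => X x = e ∧ Q x) = Pr g Q := by
  unfold Pr
  rw [Finset.sum_comm]
  apply Finset.sum_congr rfl
  intro x _
  by_cases h : Q x <;> simp [h]

theorem Lfac_congr (p q : ℕ) {A B : ℤ} (g : ℤ → Pat E (-(p : ℤ)) (q : ℤ) → ℝ) (i : ℤ)
    (ψ ψ' : Pat E A B)
    (h : ∀ v ∈ Finset.Icc (-(p : ℤ)) (q : ℤ), ev ψ (i + v) = ev ψ' (i + v)) :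
    Lfac p q g i ψ = Lfac p q g i ψ' := by
  rw [Lfac_eq, Lfac_eq, win_congr p q i ψ ψ' h]
  congr 1
  apply Pr_congr
  intro χ
  refine forall₂_congr fun v hv => ?_
  rw [Finset.mem_Icc] at hv
  rw [h v (Finset.mem_Icc.2 ⟨by omega, by omega⟩)]

theorem Rfac_congr (p q : ℕ) {A B : ℤ} (g : ℤ → Pat E (-(p : ℤ)) (q : ℤ) → ℝ) (i : ℤ)
    (ψ ψ' : Pat E A B)
    (h : ∀ v ∈ Finset.Icc (-(p : ℤ)) (q : ℤ), ev ψ (i + v) = ev ψ' (i + v)) :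
    Rfac p q g i ψ = Rfac p q g i ψ' := by
  rw [Rfac_eq, Rfac_eq, win_congr p q i ψ ψ' h]
  congr 1
  apply Pr_congr
  intro χ
  refine forall₂_congr fun v hv => ?_
  rw [Finset.mem_Icc] at hv
  rw [h v (Finset.mem_Icc.2 ⟨by omega, by omega⟩)]

theorem Lfac_sum (p q : ℕ) {A B : ℤ} (g : ℤ → Pat E (-(p : ℤ)) (q : ℤ) → ℝ) (i : ℤ)
    (ψ : Pat E A B) (hj : i + -(p : ℤ) ∈ Finset.Icc A B)
    (hpos : Pr (g i) (fun χ => ∀ v ∈ Finset.Icc (-(p : ℤ) + 1) (q : ℤ),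
      ev χ v = ev ψ (i + v)) ≠ 0) :
    ∑ e, Lfac p q g i (upd ψ (i + -(p : ℤ)) e) = 1 := by
  have : ∀ e, Lfac p q g i (upd ψ (i + -(p : ℤ)) e) =
      Pr (g i) (fun χ => ev χ (-(p : ℤ)) = e ∧ ∀ v ∈ Finset.Icc (-(p : ℤ) + 1) (q : ℤ),
        ev χ v = ev ψ (i + v)) / Pr (g i) (fun χ => ∀ v ∈ Finset.Icc (-(p : ℤ) + 1) (q : ℤ),
        ev χ v = ev ψ (i + v)) := by
    intro e
    have hQ : ∀ χ : Pat E (-(p : ℤ)) (q : ℤ), (∀ v ∈ Finset.Icc (-(p : ℤ) + 1) (q : ℤ),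
        ev χ v = ev (upd ψ (i + -(p : ℤ)) e) (i + v)) ↔
        (∀ v ∈ Finset.Icc (-(p : ℤ) + 1) (q : ℤ), ev χ v = ev ψ (i + v)) := by
      intro χ
      refine forall₂_congr fun v hv => ?_
      rw [Finset.mem_Icc] at hv
      rw [ev_upd_ne _ _ _ _ (by omega)]
    unfold Lfac condPr
    rw [ev_upd_self _ _ _ hj]
    simp only [hQ]
  simp only [this]
  rw [← Finset.sum_div, Pr_sum_eq (g i) (fun χ => ev χ (-(p : ℤ))), div_self hpos]

theorem Rfac_sum (p q : ℕ) {A B : ℤ} (g : ℤ → Pat E (-(p : ℤ)) (q : ℤ) → ℝ) (i : ℤ)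
    (ψ : Pat E A B) (hj : i + (q : ℤ) ∈ Finset.Icc A B)
    (hpos : Pr (g i) (fun χ => ∀ v ∈ Finset.Icc (-(p : ℤ)) ((q : ℤ) - 1),
      ev χ v = ev ψ (i + v)) ≠ 0) :
    ∑ e, Rfac p q g i (upd ψ (i + (q : ℤ)) e) = 1 := by
  have : ∀ e, Rfac p q g i (upd ψ (i + (q : ℤ)) e) =
      Pr (g i) (fun χ => ev χ (q : ℤ) = e ∧ ∀ v ∈ Finset.Icc (-(p : ℤ)) ((q : ℤ) - 1),
        ev χ v = ev ψ (i + v)) / Pr (g i) (fun χ => ∀ v ∈ Finset.Icc (-(p : ℤ)) ((q : ℤ) - 1),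
        ev χ v = ev ψ (i + v)) := by
    intro e
    have hQ : ∀ χ : Pat E (-(p : ℤ)) (q : ℤ), (∀ v ∈ Finset.Icc (-(p : ℤ)) ((q : ℤ) - 1),
        ev χ v = ev (upd ψ (i + (q : ℤ)) e) (i + v)) ↔
        (∀ v ∈ Finset.Icc (-(p : ℤ)) ((q : ℤ) - 1), ev χ v = ev ψ (i + v)) := by
      intro χ
      refine forall₂_congr fun v hv => ?_
      rw [Finset.mem_Icc] at hv
      rw [ev_upd_ne _ _ _ _ (by omega)]
    unfold Rfac condPr
    rw [ev_upd_self _ _ _ hj]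
    simp only [hQ]
  simp only [this]
  rw [← Finset.sum_div, Pr_sum_eq (g i) (fun χ => ev χ (q : ℤ)), div_self hpos]

theorem right_sum (p q : ℕ) (t u : ℤ) (g : ℤ → Pat E (-(p : ℤ)) (q : ℤ) → ℝ)
    (hg : ∀ j ∈ Finset.Icc (-t) u, IsDensity (g j)) (hext : Extendable p q t u g)
    (i : ℤ) (hi : -t ≤ i) (n : ℕ) (hn : i + n ≤ u) :
    (Fintype.card E : ℝ) ^ n * ∑ ψ : Pat E (-(p : ℤ) - t) ((q : ℤ) + u),
      g i (win p q i ψ) * ∏ l ∈ Finset.Icc (i + 1) (i + n), Rfac p q g l ψ =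
    ∑ ψ : Pat E (-(p : ℤ) - t) ((q : ℤ) + u), g i (win p q i ψ) := by
  induction n with
  | zero => simp
  | succ n ih =>
    push_cast at hn ⊢
    rw [← ih (by omega), pow_succ, mul_assoc]
    congr 1
    have e : Finset.Icc (i + 1) (i + (n + 1)) =
        insert (i + n + 1) (Finset.Icc (i + 1) (i + (n : ℤ))) := by
      ext x; simp only [Finset.mem_Icc, Finset.mem_insert]; omega
    have hnot : i + n + 1 ∉ Finset.Icc (i + 1) (i + (n : ℤ)) := by simp
    rw [e]
    simp only [Finset.prod_insert hnot]
    rw [← step_sum (i + n + 1 + q) (Finset.mem_Icc.2 ⟨by omega, by omega⟩)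
      (fun ψ : Pat E (-(p : ℤ) - t) ((q : ℤ) + u) =>
        g i (win p q i ψ) * ∏ l ∈ Finset.Icc (i + 1) (i + (n : ℤ)), Rfac p q g l ψ)
      (fun ψ => Rfac p q g (i + n + 1) ψ)]
    · congr 1
      apply Finset.sum_congr rfl
      intro ψ _
      ring
    · intro ψ e
      have : ∀ l ≤ i + (n : ℤ), ∀ v ∈ Finset.Icc (-(p : ℤ)) (q : ℤ),
          ev (upd ψ (i + n + 1 + q) e) (l + v) = ev ψ (l + v) := by
        intro l hl v hv
        rw [Finset.mem_Icc] at hv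
        exact ev_upd_ne _ _ _ _ (by omega)
      rw [win_congr p q i _ _ (this i (by omega))]
      congr 1
      apply Finset.prod_congr rfl
      intro l hl
      exact Rfac_congr _ _ _ _ _ _ (this l (Finset.mem_Icc.1 hl).2)
    · intro ψ hψ
      apply Rfac_sum _ _ _ _ _ (Finset.mem_Icc.2 ⟨by omega, by omega⟩)
      have hne : g (i + n) (win p q (i + n) ψ) ≠ 0 := by
        rcases Nat.eq_zero_or_pos n with h0 | h0
        · subst h0
          simpa using left_ne_zero_of_mul hψ
        · have := Finset.prod_ne_zero_iff.1 (right_ne_zero_of_mul hψ) (i + n)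
            (Finset.mem_Icc.2 ⟨by omega, by omega⟩)
          rw [Rfac_eq] at this
          intro h
          simp [h] at this
      have hm : i + (n : ℤ) ∈ Finset.Icc (-t) u := Finset.mem_Icc.2 ⟨by omega, by omega⟩
      have hm' : i + (n : ℤ) + 1 ∈ Finset.Icc (-t) u := Finset.mem_Icc.2 ⟨by omega, by omega⟩
      obtain ⟨ψ', h1, h2⟩ := hext _ hm _ (lt_of_le_of_ne ((hg _ hm).1 _) hne.symm)
      refine (Pr_pos _ (hg _ hm').1 _ (win p q (i + n + 1) ψ') ?_ (h2 _ hm')).ne'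
      intro v hv
      rw [Finset.mem_Icc] at hv
      have hv' : v + 1 ∈ Finset.Icc (-(p : ℤ)) (q : ℤ) := Finset.mem_Icc.2 ⟨by omega, by omega⟩
      rw [ev_win _ _ _ _ _ (Finset.mem_Icc.2 ⟨by omega, by omega⟩)]
      have := (eq_win_iff _ _ _ _ _).1 h1 (v + 1) hv'
      rw [ev_win _ _ _ _ _ hv'] at this
      rw [show i + (n : ℤ) + 1 + v = i + n + (v + 1) by ring]
      exact this

theorem left_sum (p q : ℕ) (t u : ℤ) (g : ℤ → Pat E (-(p : ℤ)) (q : ℤ) → ℝ)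
    (hg : ∀ j ∈ Finset.Icc (-t) u, IsDensity (g j)) (hext : Extendable p q t u g)
    (i : ℤ) (hi : i ≤ u) (G : Pat E (-(p : ℤ) - t) ((q : ℤ) + u) → ℝ)
    (hG : ∀ ψ e j, j < i - p → G (upd ψ j e) = G ψ)
    (hG' : ∀ ψ, G ψ ≠ 0 → g i (win p q i ψ) ≠ 0) (n : ℕ) (hn : -t ≤ i - n) :
    (Fintype.card E : ℝ) ^ n * ∑ ψ : Pat E (-(p : ℤ) - t) ((q : ℤ) + u),
      G ψ * ∏ l ∈ Finset.Icc (i - n) (i - 1), Lfac p q g l ψ = ∑ ψ, G ψ := by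
  induction n with
  | zero => simp
  | succ n ih =>
    push_cast at hn ⊢
    rw [← ih (by omega), pow_succ, mul_assoc]
    congr 1
    have e : Finset.Icc (i - (n + 1)) (i - 1) =
        insert (i - n - 1) (Finset.Icc (i - (n : ℤ)) (i - 1)) := by
      ext x; simp only [Finset.mem_Icc, Finset.mem_insert]; omega
    have hnot : i - n - 1 ∉ Finset.Icc (i - (n : ℤ)) (i - 1) := by simp
    rw [e]
    simp only [Finset.prod_insert hnot]
    rw [← step_sum (i - n - 1 + -(p : ℤ)) (Finset.mem_Icc.2 ⟨by omega, by omega⟩)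
      (fun ψ : Pat E (-(p : ℤ) - t) ((q : ℤ) + u) =>
        G ψ * ∏ l ∈ Finset.Icc (i - (n : ℤ)) (i - 1), Lfac p q g l ψ)
      (fun ψ => Lfac p q g (i - n - 1) ψ)]
    · congr 1
      apply Finset.sum_congr rfl
      intro ψ _
      ring
    · intro ψ e
      have : ∀ l, i - (n : ℤ) ≤ l → ∀ v ∈ Finset.Icc (-(p : ℤ)) (q : ℤ),
          ev (upd ψ (i - n - 1 + -(p : ℤ)) e) (l + v) = ev ψ (l + v) := by
        intro l hl v hv
        rw [Finset.mem_Icc] at hv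
        exact ev_upd_ne _ _ _ _ (by omega)
      rw [hG _ _ _ (by omega)]
      congr 1
      apply Finset.prod_congr rfl
      intro l hl
      exact Lfac_congr _ _ _ _ _ _ (this l (Finset.mem_Icc.1 hl).1)
    · intro ψ hψ
      apply Lfac_sum _ _ _ _ _ (Finset.mem_Icc.2 ⟨by omega, by omega⟩)
      have hne : g (i - n) (win p q (i - n) ψ) ≠ 0 := by
        rcases Nat.eq_zero_or_pos n with h0 | h0
        · subst h0
          simpa using hG' ψ (left_ne_zero_of_mul hψ)
        · have := Finset.prod_ne_zero_iff.1 (right_ne_zero_of_mul hψ) (i - n)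
            (Finset.mem_Icc.2 ⟨by omega, by omega⟩)
          rw [Lfac_eq] at this
          intro h
          simp [h] at this
      have hm : i - (n : ℤ) ∈ Finset.Icc (-t) u := Finset.mem_Icc.2 ⟨by omega, by omega⟩
      have hm' : i - (n : ℤ) - 1 ∈ Finset.Icc (-t) u := Finset.mem_Icc.2 ⟨by omega, by omega⟩
      obtain ⟨ψ', h1, h2⟩ := hext _ hm _ (lt_of_le_of_ne ((hg _ hm).1 _) hne.symm)
      refine (Pr_pos _ (hg _ hm').1 _ (win p q (i - n - 1) ψ') ?_ (h2 _ hm')).ne'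
      intro v hv
      rw [Finset.mem_Icc] at hv
      have hv' : v - 1 ∈ Finset.Icc (-(p : ℤ)) (q : ℤ) := Finset.mem_Icc.2 ⟨by omega, by omega⟩
      rw [ev_win _ _ _ _ _ (Finset.mem_Icc.2 ⟨by omega, by omega⟩)]
      have := (eq_win_iff _ _ _ _ _).1 h1 (v - 1) hv'
      rw [ev_win _ _ _ _ _ hv'] at this
      rw [show i - (n : ℤ) - 1 + v = i - n + (v - 1) by ring]
      exact this

theorem alpha_density (p q : ℕ) (t u : ℤ) (g : ℤ → Pat E (-(p : ℤ)) (q : ℤ) → ℝ)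
    (hg : ∀ j ∈ Finset.Icc (-t) u, IsDensity (g j)) (hext : Extendable p q t u g)
    (i : ℤ) (hi : i ∈ Finset.Icc (-t) u) : IsDensity (alpha p q t u g i) := by
  have hi' := Finset.mem_Icc.1 hi
  have hE : (Fintype.card E : ℝ) ≠ 0 := by
    exact_mod_cast Fintype.card_ne_zero
  constructor
  · intro ψ
    rw [alpha_eq]
    refine mul_nonneg (mul_nonneg (Finset.prod_nonneg ?_) ((hg i hi).1 _)) (Finset.prod_nonneg ?_)
    · intro k hk
      rw [Finset.mem_Icc] at hk
      have := (hg k (Finset.mem_Icc.2 ⟨by omega, by omega⟩)).1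
      exact div_nonneg (Pr_nonneg _ this _) (Pr_nonneg _ this _)
    · intro k hk
      rw [Finset.mem_Icc] at hk
      have := (hg k (Finset.mem_Icc.2 ⟨by omega, by omega⟩)).1
      exact div_nonneg (Pr_nonneg _ this _) (Pr_nonneg _ this _)
  · obtain ⟨n, hn⟩ := Int.eq_ofNat_of_zero_le (show 0 ≤ u - i by omega)
    obtain ⟨m, hm⟩ := Int.eq_ofNat_of_zero_le (show 0 ≤ i + t by omega)
    have hR := right_sum p q t u g hg hext i hi'.1 n (by omega)
    rw [show i + (n : ℤ) = u by omega, base_sum p q t u (g i) (hg i hi).2 i hi'.1 hi'.2] at hR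
    have hL := left_sum p q t u g hg hext i hi'.2
      (fun ψ => g i (win p q i ψ) * ∏ l ∈ Finset.Icc (i + 1) u, Rfac p q g l ψ)
      (by
        intro ψ e j hj
        have : ∀ l, i ≤ l → ∀ v ∈ Finset.Icc (-(p : ℤ)) (q : ℤ),
            ev (upd ψ j e) (l + v) = ev ψ (l + v) := by
          intro l hl v hv
          rw [Finset.mem_Icc] at hv
          exact ev_upd_ne _ _ _ _ (by omega)
        rw [win_congr p q i _ _ (this i le_rfl)]
        congr 1
        apply Finset.prod_congr rfl
        intro l hl
        rw [Finset.mem_Icc] at hl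
        exact Rfac_congr _ _ _ _ _ _ (this l (by omega)))
      (fun ψ h => left_ne_zero_of_mul h) m (by omega)
    rw [show i - (m : ℤ) = -t by omega] at hL
    rw [← hL, ← mul_assoc, ← pow_add, show (u + t).toNat = n + m by omega] at hR
    have := mul_left_cancel₀ (pow_ne_zero _ hE) (hR.trans (mul_one _).symm)
    rw [← this]
    apply Finset.sum_congr rfl
    intro ψ _
    rw [alpha_eq]
    ring

end Helpers

/-- properties of the averaged reconstruction `α_W`. -/
theorem stmt_10
    (E : Type) [Fintype E] [DecidableEq E] [Nonempty E]
    (p q : ℕ) (t u : ℤ) (htu : -t ≤ u) :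
    (∀ g : ℤ → Pat E (-(p : ℤ)) (q : ℤ) → ℝ,
      (∀ j ∈ Finset.Icc (-t) u, IsDensity (g j)) → Extendable p q t u g →
      IsDensity (alphaBar p q t u g)) ∧
    (∀ gtil : Pat E (-(p : ℤ) - t) ((q : ℤ) + u) → ℝ, IsDensity gtil →
      ∀ i ∈ Finset.Icc (-t) u,
        alphaBar p q t u (beta p q t u gtil) = alpha p q t u (beta p q t u gtil) i) := by
  have hcard : (((Finset.Icc (-t) u).card : ℝ)) ≠ 0 := by
    have : (Finset.Icc (-t) u).Nonempty := Finset.nonempty_Icc.2 htu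
    exact_mod_cast this.card_pos.ne'
  constructor
  · intro g hg hext
    have h := alpha_density p q t u g hg hext
    constructor
    · intro ψ
      exact mul_nonneg (by positivity) (Finset.sum_nonneg fun i hi => (h i hi).1 ψ)
    · unfold alphaBar
      rw [← Finset.mul_sum, Finset.sum_comm, Finset.sum_congr rfl (fun i hi => (h i hi).2)]
      simp only [Finset.sum_const, nsmul_eq_mul, mul_one]
      exact inv_mul_cancel₀ hcard
  · intro g _ i hi
    funext ψ
    have h : ∀ j ∈ Finset.Icc (-t) u, alpha p q t u (beta p q t u g) j ψ =
        alpha p q t u (beta p q t u g) (-t) ψ := by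
      intro j hj
      rw [Finset.mem_Icc] at hj
      obtain ⟨n, hn⟩ := Int.eq_ofNat_of_zero_le (show 0 ≤ j + t by omega)
      have := alpha_beta_const p q t u g ψ n (by omega)
      rwa [show -t + (n : ℤ) = j by omega] at this
    unfold alphaBar
    rw [Finset.sum_congr rfl h, h i hi, Finset.sum_const, nsmul_eq_mul,
      inv_mul_cancel_left₀ hcard]
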